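/- Let σ ≤ 32π² and m ∈ ℕ₀. There exists a constant C > 0 such that for all large α > 0, T_{α,m} ≥ C/α⁴, where T_{α,m} = sup{ ∫_B |x|^α ( e^{σu²} − Σ_{k=0}^m σ^k u^{2k}/k! ) dx : u ∈ H²_N(B), ‖Δu‖₂ = 1 }. -/

import Mathlib

open MeasureTheory

noncomputable abbrev E4 := EuclideanSpace ℝ (Fin 4)

/-- The Laplacian on `ℝ⁴`, as the trace of the second derivative. -/
noncomputable def lap4 (u : E4 → ℝ) (x : E4) : ℝ :=
  ∑ i : Fin 4, iteratedFDeriv ℝ 2 u x ![EuclideanSpace.single i 1, EuclideanSpace.single i 1]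

/-- The truncated weighted exponential functional on the unit ball `B ⊂ ℝ⁴`. -/
noncomputable def Fm (α σ : ℝ) (m : ℕ) (u : E4 → ℝ) : ℝ :=
  ∫ x in Metric.ball (0:E4) 1, ‖x‖ ^ α *
    (Real.exp (σ * (u x) ^ 2) -
      ∑ k ∈ Finset.range (m + 1), σ ^ k * (u x) ^ (2 * k) / (Nat.factorial k))

open Metric

section Laplacian

lemma continuous_lap4 {g : E4 → ℝ} (hg : ContDiff ℝ (⊤ : ℕ∞) g) : Continuous (lap4 g) := by
  unfold lap4
  have h := hg.continuous_iteratedFDeriv (m := 2) (WithTop.coe_le_coe.2 (le_top : (2 : ℕ∞) ≤ ⊤))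
  fun_prop

lemma lap4_eq_zero_of_notMem_tsupport {g : E4 → ℝ} {x : E4} (hx : x ∉ tsupport g) :
    lap4 g x = 0 := by
  have h : iteratedFDeriv ℝ 2 g x = 0 := by
    by_contra h
    exact hx (support_iteratedFDeriv_subset 2 h)
  simp [lap4, h]

lemma lap4_const_mul {g : E4 → ℝ} (hg : ContDiff ℝ (⊤ : ℕ∞) g) (c : ℝ) (x : E4) :
    lap4 (fun y => c * g y) x = c * lap4 g x := by
  have hg2 : ContDiffAt ℝ (2 : ℕ) g x := (hg.of_le (WithTop.coe_le_coe.2 (le_top : (2 : ℕ∞) ≤ ⊤))).contDiffAt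
  have h := iteratedFDeriv_const_smul_apply' (a := c) hg2
  simp only [smul_eq_mul] at h
  simp [lap4, h, Finset.mul_sum]

lemma lap4_comp_smul_sub {g : E4 → ℝ} (hg : ContDiff ℝ (⊤ : ℕ∞) g) (α : ℝ) (a x : E4) :
    lap4 (fun y => g (α • (y - a))) x = α ^ 2 * lap4 g (α • (x - a)) := by
  have h1 := iteratedFDeriv_comp_sub (𝕜 := ℝ) (f := fun y => g (α • y)) 2 a x
  have h2 := ContinuousLinearMap.iteratedFDeriv_comp_right (α • ContinuousLinearMap.id ℝ E4) hg
    (x - a) (i := 2) (WithTop.coe_le_coe.2 (le_top : (2 : ℕ∞) ≤ ⊤))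
  have h3 : g ∘ ⇑(α • ContinuousLinearMap.id ℝ E4) = fun y => g (α • y) := by
    ext y; simp
  rw [h3] at h2
  unfold lap4
  rw [h1, h2, Finset.mul_sum]
  refine Finset.sum_congr rfl fun i _ => ?_
  rw [ContinuousMultilinearMap.compContinuousLinearMap_apply]
  have h4 : (fun j : Fin 2 => (α • ContinuousLinearMap.id ℝ E4)
      ((![EuclideanSpace.single i 1, EuclideanSpace.single i 1] : Fin 2 → E4) j)) =
      fun j => α • (![EuclideanSpace.single i 1, EuclideanSpace.single i 1] : Fin 2 → E4) j := by
    ext j; simp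
  rw [h4, ContinuousMultilinearMap.map_smul_univ]
  simp [pow_two]

lemma lap4_norm_sq (x : E4) : lap4 (fun y => ‖y‖ ^ 2) x = 8 := by
  let L : E4 →L[ℝ] E4 →L[ℝ] ℝ := innerSL ℝ
  have hL : ∀ y z, L y z = inner ℝ y z := fun _ _ => rfl
  have h1 : fderiv ℝ (fun y : E4 => ‖y‖ ^ 2) = ⇑((2 : ℝ) • L) := by
    ext y z
    have h := (hasStrictFDerivAt_norm_sq y).hasFDerivAt.fderiv
    rw [h]
    simp [hL]
  have h2 : fderiv ℝ ⇑((2 : ℝ) • L) x = (2 : ℝ) • L := ContinuousLinearMap.fderiv _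
  unfold lap4
  simp only [iteratedFDeriv_two_apply, h1, h2]
  simp [hL]
  norm_num

end Laplacian

lemma integral_comp_smul_sub (f : E4 → ℝ) {α : ℝ} (hα : 0 < α) (a : E4) :
    ∫ x, f (α • (x - a)) = (α ^ 4)⁻¹ * ∫ x, f x := by
  rw [integral_sub_right_eq_self (fun x => f (α • x)) a, Measure.integral_comp_smul]
  rw [finrank_euclideanSpace_fin, abs_of_pos (by positivity), smul_eq_mul]

section TruncatedExponential

/-- The exponential of `σ t²` minus its Taylor polynomial of degree `m` in `σ t²`. -/
noncomputable def expRemainder (σ : ℝ) (m : ℕ) (t : ℝ) : ℝ :=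
  Real.exp (σ * t ^ 2) - ∑ k ∈ Finset.range (m + 1), σ ^ k * t ^ (2 * k) / (Nat.factorial k)

lemma expRemainder_eq (σ : ℝ) (m : ℕ) (t : ℝ) : expRemainder σ m t =
    Real.exp (σ * t ^ 2) - ∑ k ∈ Finset.range (m + 1), (σ * t ^ 2) ^ k / (Nat.factorial k) := by
  simp only [expRemainder, mul_pow, pow_mul]

lemma expRemainder_nonneg {σ : ℝ} (hσ : 0 < σ) (m : ℕ) (t : ℝ) : 0 ≤ expRemainder σ m t := by
  rw [expRemainder_eq, sub_nonneg]
  exact Real.sum_le_exp_of_nonneg (by positivity) _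

lemma expRemainder_pos {σ : ℝ} (hσ : 0 < σ) (m : ℕ) {t : ℝ} (ht : t ≠ 0) :
    0 < expRemainder σ m t := by
  rw [expRemainder_eq, sub_pos]
  have h := Real.sum_le_exp_of_nonneg (x := σ * t ^ 2) (by positivity) (m + 2)
  rw [Finset.sum_range_succ] at h
  have : 0 < (σ * t ^ 2) ^ (m + 1) / (Nat.factorial (m + 1)) := by positivity
  linarith

lemma expRemainder_zero (σ : ℝ) (m : ℕ) : expRemainder σ m 0 = 0 := by
  rw [expRemainder_eq, Finset.sum_range_succ']
  simp

lemma continuous_expRemainder (σ : ℝ) (m : ℕ) : Continuous (expRemainder σ m) := by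
  unfold expRemainder
  fun_prop

end TruncatedExponential

lemma exists_contDiff_tsupport_integral_lap4_sq_eq_one :
    ∃ g : E4 → ℝ, ContDiff ℝ (⊤ : ℕ∞) g ∧ tsupport g ⊆ closedBall 0 (1 / 2) ∧
      ∫ x, (lap4 g x) ^ 2 = 1 := by
  let φ : ContDiffBump (0 : E4) := ⟨1 / 4, 1 / 2, by norm_num, by norm_num⟩
  let f : E4 → ℝ := fun x => φ x * ‖x‖ ^ 2
  have hf : ContDiff ℝ (⊤ : ℕ∞) f := φ.contDiff.mul (contDiff_norm_sq ℝ)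
  have hsupp : tsupport f ⊆ closedBall 0 (1 / 2) :=
    (tsupport_mul_subset_left (f := φ)).trans φ.tsupport_eq.subset
  have hf0 : lap4 f 0 = 8 := by
    rw [← lap4_norm_sq 0]
    have h : f =ᶠ[nhds 0] fun y => ‖y‖ ^ 2 := by
      filter_upwards [φ.eventuallyEq_one] with y hy
      simp [f, hy]
    simp only [lap4, (h.iteratedFDeriv ℝ 2).eq_of_nhds]
  have hI : 0 < ∫ x, (lap4 f x) ^ 2 := by
    refine Continuous.integral_pos_of_hasCompactSupport_nonneg_nonzero (x := 0)
      ((continuous_lap4 hf).pow 2) ?_ (fun x => sq_nonneg _) (by rw [hf0]; norm_num)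
    refine HasCompactSupport.intro (isCompact_closedBall (0 : E4) (1 / 2)) fun x hx => ?_
    simp [lap4_eq_zero_of_notMem_tsupport (fun h => hx (hsupp h))]
  refine ⟨fun x => (√(∫ x, (lap4 f x) ^ 2))⁻¹ * f x, contDiff_const.mul hf,
    (tsupport_mul_subset_right (g := f)).trans hsupp, ?_⟩
  simp only [lap4_const_mul hf, mul_pow, inv_pow, Real.sq_sqrt hI.le]
  rw [integral_const_mul]
  exact inv_mul_cancel₀ hI.ne'

lemma one_div_sixteen_le_rpow {α : ℝ} (hα : 4 ≤ α) : 1 / 16 ≤ (1 - 2 / α) ^ α := by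
  have h0 : 0 < α := by linarith
  have h2 : 2 / α ≤ 1 / 2 := by rw [div_le_div_iff₀ h0 two_pos]; linarith
  have h := one_add_mul_self_le_rpow_one_add (s := -(2 / α)) (by linarith) (p := α / 4)
    (by linarith)
  have h3 : 1 + α / 4 * -(2 / α) = 1 / 2 := by field_simp; norm_num
  rw [h3, ← sub_eq_add_neg] at h
  calc (1 : ℝ) / 16 = (1 / 2) ^ 4 := by norm_num
    _ ≤ ((1 - 2 / α) ^ (α / 4)) ^ 4 := by gcongr
    _ = (1 - 2 / α) ^ α := by
      rw [← Real.rpow_natCast, ← Real.rpow_mul (by linarith)]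
      congr 1
      push_cast
      ring

/-- Lower bound for `T_{α,m}`: there are `C > 0` and `A` such that for all `α ≥ A`,
the supremum of `F_m` over `{u ∈ H²_N(B) : ‖Δu‖₂ = 1}` is at least `C/α⁴`; this is
witnessed by a smooth function compactly supported in `B` with `‖Δu‖₂ = 1`. -/
theorem full_space_lower_bound (σ : ℝ) (hσ : σ ≤ 32 * Real.pi ^ 2) (hσ0 : 0 < σ)
    (m : ℕ) :
    ∃ C > (0:ℝ), ∃ A : ℝ, ∀ α ≥ A,
      ∃ u : E4 → ℝ, ContDiff ℝ (⊤ : ℕ∞) u ∧ tsupport u ⊆ Metric.ball (0:E4) 1 ∧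
        (∫ x in Metric.ball (0:E4) 1, (lap4 u x) ^ 2) = 1 ∧
        C / α ^ 4 ≤ Fm α σ m u := by
  obtain ⟨g, hg, hsupp, hint⟩ := exists_contDiff_tsupport_integral_lap4_sq_eq_one
  have hG : 0 < ∫ x, expRemainder σ m (g x) := by
    have hx : ∃ x, g x ≠ 0 := by
      by_contra! h
      have hgz : g = 0 := funext h
      have : ∀ x, lap4 g x = 0 := fun x =>
        lap4_eq_zero_of_notMem_tsupport (by simp [hgz])
      simp [this] at hint
    obtain ⟨x, hx⟩ := hx
    refine Continuous.integral_pos_of_hasCompactSupport_nonneg_nonzero (x := x)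
      ((continuous_expRemainder σ m).comp hg.continuous) ?_
      (fun x => expRemainder_nonneg hσ0 m _) (expRemainder_pos hσ0 m hx).ne'
    refine HasCompactSupport.intro (isCompact_closedBall (0 : E4) (1 / 2)) fun y hy => ?_
    rw [image_eq_zero_of_notMem_tsupport (fun h => hy (hsupp h)), expRemainder_zero]
  refine ⟨1 / 16 * ∫ x, expRemainder σ m (g x), by positivity, 4, fun α hα => ?_⟩
  have hα0 : 0 < α := by linarith
  set a : E4 := EuclideanSpace.single 0 (1 - 1 / α) with ha
  have hinv : 1 / α ≤ 1 / 4 := one_div_le_one_div_of_le (by norm_num) hα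
  have hna : ‖a‖ = 1 - 1 / α := by
    rw [ha, PiLp.norm_single, Real.norm_of_nonneg (by linarith)]
  set u : E4 → ℝ := fun x => g (α • (x - a)) with hu
  have hucont : ContDiff ℝ (⊤ : ℕ∞) u := hg.comp (by fun_prop)
  have hdist : ∀ x, u x ≠ 0 → ‖x - a‖ ≤ 1 / α := by
    intro x hx
    have h1 := hsupp (subset_tsupport g hx)
    rw [mem_closedBall_zero_iff, norm_smul, Real.norm_of_nonneg hα0.le] at h1
    rw [le_div_iff₀ hα0]
    linarith
  have husupp : tsupport u ⊆ ball 0 1 := by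
    have h1 : tsupport u ⊆ closedBall a (1 / (2 * α)) := by
      refine closure_minimal (fun x hx => ?_) isClosed_closedBall
      have h1 := hsupp (subset_tsupport g hx)
      rw [mem_closedBall_zero_iff, norm_smul, Real.norm_of_nonneg hα0.le] at h1
      rw [mem_closedBall_iff_norm, le_div_iff₀ (by positivity)]
      linarith
    refine h1.trans fun x hx => ?_
    rw [mem_closedBall_iff_norm] at hx
    rw [mem_ball_zero_iff]
    have h2 : 1 / (2 * α) < 1 / α := one_div_lt_one_div_of_lt hα0 (by linarith)
    have h3 := norm_sub_norm_le x a
    linarith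
  refine ⟨u, hucont, husupp, ?_, ?_⟩
  · rw [setIntegral_eq_integral_of_forall_compl_eq_zero fun x hx => by
      simp [lap4_eq_zero_of_notMem_tsupport fun h => hx (husupp h)]]
    simp only [hu, lap4_comp_smul_sub hg]
    rw [integral_comp_smul_sub (fun y => (α ^ 2 * lap4 g y) ^ 2) hα0]
    simp only [mul_pow]
    rw [integral_const_mul, hint]
    field_simp
  · have hzero : ∀ x ∉ tsupport u, expRemainder σ m (u x) = 0 := fun x hx => by
      rw [image_eq_zero_of_notMem_tsupport hx, expRemainder_zero]
    have hFm : Fm α σ m u = ∫ x, ‖x‖ ^ α * expRemainder σ m (u x) :=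
      setIntegral_eq_integral_of_forall_compl_eq_zero
        (f := fun x => ‖x‖ ^ α * expRemainder σ m (u x)) fun x hx => by
          rw [hzero x fun h => hx (husupp h), mul_zero]
    have hcomp : IsCompact (tsupport u) :=
      (isCompact_closedBall (0 : E4) 1).of_isClosed_subset (isClosed_tsupport u)
        (husupp.trans ball_subset_closedBall)
    have hcont : Continuous fun x => expRemainder σ m (u x) :=
      (continuous_expRemainder σ m).comp hucont.continuous
    calc (1 / 16 * ∫ x, expRemainder σ m (g x)) / α ^ 4
        = ∫ x, 1 / 16 * expRemainder σ m (u x) := by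
          rw [integral_const_mul, hu, integral_comp_smul_sub (fun y => expRemainder σ m (g y)) hα0]
          ring
      _ ≤ ∫ x, ‖x‖ ^ α * expRemainder σ m (u x) := by
          refine integral_mono ?_ ?_ fun x => ?_
          · exact (hcont.const_mul _).integrable_of_hasCompactSupport
              (.intro hcomp fun x hx => by rw [hzero x hx, mul_zero])
          · exact ((continuous_norm.rpow_const fun _ => .inr hα0.le).mul hcont
              ).integrable_of_hasCompactSupport
              (.intro hcomp fun x hx => by simp [hzero x hx])
          · by_cases hx : u x = 0
            · simp [hx, expRemainder_zero]
            refine mul_le_mul_of_nonneg_right ?_ (expRemainder_nonneg hσ0 m _)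
            refine (one_div_sixteen_le_rpow hα).trans ?_
            have h1 := hdist x hx
            have h2 := norm_sub_norm_le a x
            rw [norm_sub_rev] at h2
            have h3 : 2 / α = 2 * (1 / α) := by ring
            exact Real.rpow_le_rpow (by linarith) (by linarith) hα0.le
      _ = Fm α σ m u := hFm.symm
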